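/- For every integer ℓ ≥ 1, every continuous function g : [r0, ∞) → ℝ with ‖g‖_{L²_{δ-2}} < ∞ and ‖g‖_{C⁰_{δ-2}} < ∞, and every real number v, there exists a unique function f belonging to H²_δ ∩ C²_δ such that (L_ℓ f)(r) = g(r) for all r ≥ r0 and f'(r0) − (2/r0)·f(r0) = v. -/

import Mathlib

/-!
Write `P(r) = r (r - 2 m0)` and `L = ℓ (ℓ + 1) ≥ 2`. Since `P' = 2 (r - m0)`, the equation
`L_ℓ f = g` is `(P f')' - L f = P g`.

*Uniqueness* (`IsSol.eq_zero`). If `g = 0` and `v = 0`, then `F = P f f'` satisfies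
`F' = P f'² + L f² ≥ 0` and `F(r0) = P(r0) (2 / r0) f(r0)² ≥ 0`, while the `C⁰` bounds give
`F = O(r^(2δ+1)) → 0` because `δ < -1/2`. Hence `F = 0`, so `F' = 0` and `f = 0`.

*Existence* (`exists_growing`, `IsGrowing.exists_sol`). The homogeneous equation has a polynomial
solution `u` of degree `ℓ` in `r - 2 m0` with positive coefficients (a Legendre polynomial in
`r / m0 - 1`). Reduction of order turns the equation into `(P u² (f / u)')' = u P g`, so two
integrations, the first from `r0` with initial value `c` and the second from infinity, give a
solution with `f = O(r^δ)`, `f' = O(r^(δ-1))` and `P (u f' - u' f)(r0) = c`. Taking `g = 0`,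
`c = 1` gives a nonzero decaying homogeneous solution, whose boundary value
`f'(r0) - (2 / r0) f(r0)` is nonzero by uniqueness; adding a multiple of it to the solution for
`g` and `c = 0` reaches every `v`.

*Weighted `L²` bounds* (`IsSol.energy`). Pair the equation with `r^(-2δ-1) f` and integrate by
parts over `[r0, R]`. The boundary terms are bounded by the `C⁰` bounds, and the zeroth order
coefficient is at least `L - δ (2δ + 1) ≥ 1` since `-1 < δ < -1/2`, so `f` and `f'` are controlled
by `g` uniformly in `R`; the equation then controls `f''`.
-/

open Set MeasureTheory
open scoped ENNReal

/-- Squared weighted L² norm: `‖f‖²_{L²_μ} = ∫_{r0}^∞ r^{-2μ-1} f(r)² dr`. -/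
noncomputable def wL2 (r0 μ : ℝ) (f : ℝ → ℝ) : ℝ≥0∞ :=
  ∫⁻ r in Set.Ioi r0, ENNReal.ofReal (r ^ (-2*μ-1) * (f r)^2)

/-- Squared weighted C⁰ norm: `‖f‖²_{C⁰_μ} = sup_{r ≥ r0} r^{-2μ} f(r)²`. -/
noncomputable def wC0 (r0 μ : ℝ) (f : ℝ → ℝ) : ℝ≥0∞ :=
  ⨆ r ∈ Set.Ici r0, ENNReal.ofReal (r ^ (-2*μ) * (f r)^2)

/-- First derivative on `[r0, ∞)`. -/
noncomputable def d1 (r0 : ℝ) (f : ℝ → ℝ) : ℝ → ℝ :=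
  fun r => derivWithin f (Set.Ici r0) r

/-- Second derivative on `[r0, ∞)`. -/
noncomputable def d2 (r0 : ℝ) (f : ℝ → ℝ) : ℝ → ℝ := d1 r0 (d1 r0 f)

/-- `f` belongs to `H²_δ ∩ C²_δ`. -/
def MemH2C2 (r0 δ : ℝ) (f : ℝ → ℝ) : Prop :=
  ContDiffOn ℝ 2 f (Set.Ici r0) ∧
  wL2 r0 δ f ≠ ⊤ ∧ wL2 r0 (δ-1) (d1 r0 f) ≠ ⊤ ∧ wL2 r0 (δ-2) (d2 r0 f) ≠ ⊤ ∧
  wC0 r0 δ f ≠ ⊤ ∧ wC0 r0 (δ-1) (d1 r0 f) ≠ ⊤ ∧ wC0 r0 (δ-2) (d2 r0 f) ≠ ⊤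

/-- The operator `L_ℓ`. -/
noncomputable def Lop (r0 m0 : ℝ) (l : ℤ) (f : ℝ → ℝ) : ℝ → ℝ :=
  fun r => d2 r0 f r + (2*(r - m0)/(r*(r - 2*m0))) * d1 r0 f r
    - ((l : ℝ)*((l : ℝ)+1)/(r*(r - 2*m0))) * f r

/-! ### Weighted norms and solutions with pointwise decay -/

/-- `f`, with derivative `f'`, solves `f'' + 2 (r - m0) / P f' - L / P f = g` on `[r0, ∞)`, where
`P = r (r - 2 m0)`, and has the pointwise decay `f = O(r^δ)`, `f' = O(r^(δ-1))`. Derivatives are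
one-sided at `r0`. No weighted `L²` bound is included: `IsSol.energy` derives it. -/
structure IsSol (m0 r0 δ L : ℝ) (g f f' : ℝ → ℝ) : Prop where
  hf : ∀ r, r0 ≤ r → HasDerivWithinAt f (f' r) (Ici r0) r
  hf' : ∀ r, r0 ≤ r → HasDerivWithinAt f'
    (g r - 2*(r - m0)/(r*(r - 2*m0)) * f' r + L/(r*(r - 2*m0)) * f r) (Ici r0) r
  bound : ∃ C, 0 ≤ C ∧ ∀ r, r0 ≤ r → |f r| ≤ C * r ^ δ ∧ |f' r| ≤ C * r ^ (δ - 1)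

/-- Finiteness of the weighted `C⁰` norm as an unsquared pointwise bound. -/
theorem wC0_ne_top_iff {r0 μ : ℝ} (h0 : 0 < r0) (f : ℝ → ℝ) :
    wC0 r0 μ f ≠ ⊤ ↔ ∃ C, 0 ≤ C ∧ ∀ r, r0 ≤ r → |f r| ≤ C * r ^ μ := by
  constructor
  · intro h
    refine ⟨√ (wC0 r0 μ f).toReal, Real.sqrt_nonneg _, fun r hr => ?_⟩
    have hrp : 0 < r := h0.trans_le hr
    have h1 : ENNReal.ofReal (r ^ (-2*μ) * (f r)^2) ≤ wC0 r0 μ f :=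
      le_iSup₂_of_le (f := fun r (_ : r ∈ Ici r0) => ENNReal.ofReal (r ^ (-2*μ) * (f r)^2))
        r hr le_rfl
    have h2 := (ENNReal.ofReal_le_iff_le_toReal h).1 h1
    have h3 : |f r| * r ^ (-μ) ≤ √ (wC0 r0 μ f).toReal := by
      apply Real.le_sqrt_of_sq_le
      refine le_trans (le_of_eq ?_) h2
      rw [mul_pow, sq_abs, mul_comm, ← Real.rpow_natCast, ← Real.rpow_mul hrp.le]
      congr 2; push_cast; ring
    have h4 : r ^ (-μ) * r ^ μ = 1 := by
      rw [← Real.rpow_add hrp]; simp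
    calc |f r| = (|f r| * r ^ (-μ)) * r ^ μ := by rw [mul_assoc, h4, mul_one]
      _ ≤ _ := by gcongr
  · rintro ⟨C, hC, h⟩
    refine ne_top_of_le_ne_top (b := ENNReal.ofReal (C^2)) ENNReal.ofReal_ne_top ?_
    refine iSup₂_le fun r hr => ENNReal.ofReal_le_ofReal ?_
    have hrp : 0 < r := h0.trans_le hr
    have h1 := h r hr
    have h2 : (f r)^2 ≤ (C * r ^ μ)^2 := by
      rw [← sq_abs]; gcongr
    calc r ^ (-2*μ) * (f r)^2 ≤ r ^ (-2*μ) * (C * r ^ μ)^2 := by gcongr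
      _ = C^2 * (r ^ (-2*μ) * (r^μ)^2) := by ring
      _ = C^2 := by
        rw [← Real.rpow_natCast (r^μ), ← Real.rpow_mul hrp.le, ← Real.rpow_add hrp]
        have : -2 * μ + μ * (2:ℕ) = 0 := by push_cast; ring
        rw [this]; simp

/-- The second derivative of a `C²` solution is recovered by solving the equation for it. -/
theorem isSol_of_mem {m0 r0 δ : ℝ} (hm0 : 0 < m0) (hr0 : 2*m0 < r0) {l : ℤ} {g f : ℝ → ℝ}
    (hf : MemH2C2 r0 δ f) (hL : ∀ r, r0 ≤ r → Lop r0 m0 l f r = g r) :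
    IsSol m0 r0 δ (l * (l + 1)) g f (d1 r0 f) := by
  have h0 : 0 < r0 := by linarith
  obtain ⟨hc, -, -, -, h1, h2, -⟩ := hf
  rw [show (2 : WithTop ℕ∞) = 1 + 1 by norm_num,
    contDiffOn_succ_iff_derivWithin (uniqueDiffOn_Ici r0)] at hc
  obtain ⟨hd, -, hc⟩ := hc
  have hd' := hc.differentiableOn one_ne_zero
  obtain ⟨C1, hC1, h1⟩ := (wC0_ne_top_iff h0 _).1 h1
  obtain ⟨C2, hC2, h2⟩ := (wC0_ne_top_iff h0 _).1 h2
  refine ⟨fun r hr => (hd r hr).hasDerivWithinAt, fun r hr => ?_, max C1 C2,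
    le_max_of_le_left hC1, fun r hr => ?_⟩
  · have := (hd' r hr).hasDerivWithinAt
    have e := hL r hr
    refine this.congr_deriv ?_
    rw [← e]
    simp only [Lop, d2]
    change d1 r0 (d1 r0 f) r = _
    ring
  · have hrp : 0 < r := h0.trans_le hr
    constructor
    · exact (h1 r hr).trans (by gcongr; exact le_max_left _ _)
    · exact (h2 r hr).trans (by gcongr; exact le_max_right _ _)

theorem IsSol.add_smul {m0 r0 δ L : ℝ} {g₁ g₂ f₁ f₂ f₁' f₂' : ℝ → ℝ}
    (h₁ : IsSol m0 r0 δ L g₁ f₁ f₁') (h₂ : IsSol m0 r0 δ L g₂ f₂ f₂') (t : ℝ) :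
    IsSol m0 r0 δ L (fun r => g₁ r + t * g₂ r) (fun r => f₁ r + t * f₂ r)
      (fun r => f₁' r + t * f₂' r) := by
  obtain ⟨C₁, hC₁, hb₁⟩ := h₁.bound
  obtain ⟨C₂, hC₂, hb₂⟩ := h₂.bound
  refine ⟨fun r hr => (h₁.hf r hr).add ((h₂.hf r hr).const_mul t), fun r hr => ?_,
    C₁ + |t| * C₂, by positivity, fun r hr => ?_⟩
  · refine ((h₁.hf' r hr).add ((h₂.hf' r hr).const_mul t)).congr_deriv ?_
    ring
  · have key : ∀ a b c d e : ℝ, |a| ≤ C₁ * e → |b| ≤ C₂ * e →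
        |a + t * b| ≤ (C₁ + |t| * C₂) * e := by
      intro a b c d e ha hb
      calc |a + t * b| ≤ |a| + |t| * |b| := (abs_add_le _ _).trans (by rw [abs_mul])
        _ ≤ C₁ * e + |t| * (C₂ * e) := by gcongr
        _ = _ := by ring
    exact ⟨key _ _ 0 0 _ (hb₁ r hr).1 (hb₂ r hr).1, key _ _ 0 0 _ (hb₁ r hr).2 (hb₂ r hr).2⟩

/-! ### Uniqueness -/

/-- A decaying homogeneous solution with zero boundary value vanishes: `P f f'` is nondecreasing,
nonnegative at `r0`, and tends to zero at infinity. -/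
theorem IsSol.eq_zero {m0 r0 δ L : ℝ} (hm0 : 0 < m0) (hr0 : 2*m0 < r0) (hδ : δ < -(1/2))
    (hL : 0 < L) {f f' : ℝ → ℝ} (h : IsSol m0 r0 δ L (fun _ => 0) f f')
    (hb : f' r0 = 2 / r0 * f r0) : ∀ r, r0 ≤ r → f r = 0 := by
  have h0 : 0 < r0 := by linarith
  set F : ℝ → ℝ := fun r => r * (r - 2*m0) * (f r * f' r) with hF
  have hder : ∀ r, r0 ≤ r → HasDerivWithinAt F
      (r * (r - 2*m0) * f' r ^ 2 + L * f r ^ 2) (Ici r0) r := by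
    intro r hr
    have hr1 : r ≠ 0 := by linarith
    have hr2 : r - 2*m0 ≠ 0 := by linarith
    have hP : HasDerivWithinAt (fun r : ℝ => r * (r - 2*m0)) (1 * (r - 2*m0) + r * 1) (Ici r0) r :=
      (hasDerivWithinAt_id r _).mul ((hasDerivWithinAt_id r _).sub_const _)
    refine (hP.mul ((h.hf r hr).mul (h.hf' r hr))).congr_deriv ?_
    simp only [Pi.mul_apply]
    field_simp
    ring
  have hmono : MonotoneOn F (Ici r0) := by
    refine monotoneOn_of_hasDerivWithinAt_nonneg (convex_Ici r0)
      (fun r hr => (hder r hr).continuousWithinAt)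
      (fun r hr => (hder r (interior_subset hr)).mono interior_subset) ?_
    intro r hr
    have hr : r0 ≤ r := interior_subset hr
    have : 0 < r := by linarith
    have : 0 < r - 2*m0 := by linarith
    positivity
  have hF0 : 0 ≤ F r0 := by
    have : 0 < r0 - 2*m0 := by linarith
    simp only [hF, hb]
    have : f r0 * (2 / r0 * f r0) = 2 / r0 * f r0 ^ 2 := by ring
    rw [this]; positivity
  obtain ⟨C, hC, hbd⟩ := h.bound
  have hle : ∀ r, r0 ≤ r → F r ≤ C^2 * r ^ (2*δ+1) := by
    intro r hr
    have hr1 : 0 < r := by linarith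
    have hr2 : 0 < r - 2*m0 := by linarith
    obtain ⟨b1, b2⟩ := hbd r hr
    calc F r ≤ r * (r - 2*m0) * (|f r| * |f' r|) := by
          simp only [hF]; rw [← abs_mul]; gcongr; exact le_abs_self _
      _ ≤ r * r * ((C * r ^ δ) * (C * r ^ (δ-1))) := by gcongr; linarith
      _ = C^2 * (r ^ (1:ℝ) * r ^ (1:ℝ) * r ^ δ * r ^ (δ-1)) := by rw [Real.rpow_one]; ring
      _ = _ := by
        rw [← Real.rpow_add hr1, ← Real.rpow_add hr1, ← Real.rpow_add hr1]; congr 2; ring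
  have hlim : Filter.Tendsto (fun r : ℝ => C^2 * r ^ (2*δ+1)) Filter.atTop (nhds 0) := by
    have := (tendsto_rpow_neg_atTop (y := -(2*δ+1)) (by linarith)).const_mul (C^2)
    simpa using this
  have hFz : ∀ r, r0 ≤ r → F r = 0 := by
    intro r hr
    refine le_antisymm ?_ (hF0.trans (hmono self_mem_Ici hr hr))
    refine ge_of_tendsto hlim ?_
    filter_upwards [Filter.eventually_ge_atTop r] with s hs
    exact (hmono hr (hr.trans hs) hs).trans (hle s (hr.trans hs))
  intro r hr
  have hz : HasDerivWithinAt F 0 (Ici r0) r :=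
    (hasDerivWithinAt_const r (Ici r0) (0:ℝ)).congr (fun s hs => hFz s hs) (hFz r hr)
  have e := (uniqueDiffOn_Ici r0 r hr).eq_deriv _ (hder r hr) hz
  have hr1 : 0 < r := by linarith
  have hr2 : 0 < r - 2*m0 := by linarith
  have e1 : 0 ≤ r * (r - 2*m0) * f' r ^ 2 := by positivity
  have e2 : 0 ≤ L * f r ^ 2 := by positivity
  have e3 : L * f r ^ 2 = 0 := by linarith
  simpa [hL.ne'] using e3

theorem one_sub_div_pos {m0 r0 : ℝ} (h0 : 0 < r0) (hr0 : 2*m0 < r0) : 0 < 1 - 2*m0/r0 := by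
  rw [sub_pos, div_lt_one h0]; exact hr0

/-- On `[r0, ∞)` the factor `r - 2 m0` is comparable with `r`, with constant `1 - 2 m0 / r0`. -/
theorem one_sub_div_mul_le {m0 r0 r : ℝ} (hm0 : 0 < m0) (h0 : 0 < r0) (hr : r0 ≤ r) :
    (1 - 2*m0/r0) * r ≤ r - 2*m0 := by
  have : 2*m0 ≤ 2*m0/r0 * r := by
    rw [div_mul_eq_mul_div, le_div_iff₀ h0]; gcongr
  linarith

/-! ### The weighted energy estimate -/

theorem wL2_ne_top_iff {r0 μ : ℝ} (h0 : 0 < r0) {f : ℝ → ℝ} (hf : ContinuousOn f (Ici r0)) :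
    wL2 r0 μ f ≠ ⊤ ↔ IntegrableOn (fun r => r ^ (-2*μ-1) * (f r)^2) (Ioi r0) := by
  have hc : ContinuousOn (fun r => r ^ (-2*μ-1) * (f r)^2) (Ioi r0) := by
    refine ContinuousOn.mul (fun r hr => ?_) ((hf.mono Ioi_subset_Ici_self).pow 2)
    exact (Real.continuousAt_rpow_const _ _ (Or.inl (h0.trans hr).ne')).continuousWithinAt
  have hm := hc.aestronglyMeasurable (μ := volume) measurableSet_Ioi
  have hpos : 0 ≤ᵐ[volume.restrict (Ioi r0)] (fun r => r ^ (-2*μ-1) * (f r)^2) := by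
    filter_upwards [ae_restrict_mem measurableSet_Ioi] with r hr
    have : 0 < r := h0.trans hr
    simp only [Pi.zero_apply]
    positivity
  rw [IntegrableOn, Integrable, hasFiniteIntegral_iff_ofReal hpos, lt_top_iff_ne_top]
  exact ⟨fun h => ⟨hm, h⟩, fun h => h.2⟩

theorem continuousOn_rpow_mul {r0 : ℝ} (h0 : 0 < r0) {f : ℝ → ℝ} (a : ℝ)
    (hf : ContinuousOn f (Ici r0)) :
    ContinuousOn (fun r => r ^ a * (f r)^2) (Ici r0) := by
  refine ContinuousOn.mul (fun r hr => ?_) (hf.pow 2)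
  exact (Real.continuousAt_rpow_const _ _ (Or.inl (h0.trans_le hr).ne')).continuousWithinAt

/-- The weighted energy estimate. With `w = r^(-2δ-1)` and `P = r (r - 2 m0)`, the function
`Φ = P w f f' - (1/2) P w' f²` is bounded by the pointwise decay, and
`Φ' ≥ (1/2) w f² + κ r² w f'² - (1/2) w r⁴ g²` with `κ = 1 - 2 m0 / r0`; integrating this bounds
the integrals of `w f²` and `w r² f'²`. -/
theorem IsSol.energy {m0 r0 δ L : ℝ} (hm0 : 0 < m0) (hr0 : 2*m0 < r0)
    (hδ1 : -1 < δ) (hδ2 : δ < -(1/2)) (hL : 2 ≤ L) {g f f' : ℝ → ℝ}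
    (h : IsSol m0 r0 δ L g f f') (hg : ContinuousOn g (Ici r0))
    (hgL : IntegrableOn (fun r => r ^ (-2*(δ-2)-1) * (g r)^2) (Ioi r0)) :
    IntegrableOn (fun r => r ^ (-2*δ-1) * (f r)^2) (Ioi r0) ∧
    IntegrableOn (fun r => r ^ (-2*(δ-1)-1) * (f' r)^2) (Ioi r0) := by
  have h0 : 0 < r0 := by linarith
  have hfc : ContinuousOn f (Ici r0) := fun r hr => (h.hf r hr).continuousWithinAt
  have hfc' : ContinuousOn f' (Ici r0) := fun r hr => (h.hf' r hr).continuousWithinAt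
  set κ : ℝ := 1 - 2*m0/r0
  have hκ0 : 0 < κ := one_sub_div_pos h0 hr0
  have hκr : ∀ r, r0 ≤ r → κ * r ≤ r - 2*m0 := fun r hr => one_sub_div_mul_le hm0 h0 hr
  set A : ℝ → ℝ := fun r => r ^ (-2*δ-1) * (f r)^2 with hA
  set B : ℝ → ℝ := fun r => r ^ (-2*(δ-1)-1) * (f' r)^2 with hB
  set D : ℝ → ℝ := fun r => r ^ (-2*(δ-2)-1) * (g r)^2 with hD
  have hAc : ContinuousOn A (Ici r0) := continuousOn_rpow_mul h0 _ hfc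
  have hBc : ContinuousOn B (Ici r0) := continuousOn_rpow_mul h0 _ hfc'
  have hDc : ContinuousOn D (Ici r0) := continuousOn_rpow_mul h0 _ hg
  have hpow : ∀ r : ℝ, 0 < r → r ^ (-2*(δ-1)-1) = r ^ (-2*δ-1) * r^2 ∧
      r ^ (-2*(δ-2)-1) = r ^ (-2*δ-1) * r^4 ∧ r ^ (-2*δ-2) = r ^ (-2*δ-1) / r := by
    intro r hr
    refine ⟨?_, ?_, ?_⟩
    · rw [← Real.rpow_natCast, ← Real.rpow_add hr]; congr 1; push_cast; ring
    · rw [← Real.rpow_natCast, ← Real.rpow_add hr]; congr 1; push_cast; ring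
    · rw [← Real.rpow_sub_one hr.ne']; congr 1; ring
  set Φ : ℝ → ℝ := fun r => r * (r - 2*m0) * r ^ (-2*δ-1) * (f r * f' r)
    + (2*δ+1)/2 * ((r - 2*m0) * r ^ (-2*δ-1)) * (f r)^2 with hΦ
  set Ψ : ℝ → ℝ := fun r => r ^ (-2*δ-1) * (r * (r - 2*m0) * g r * f r
      + L * (f r)^2 + r * (r - 2*m0) * (f' r)^2)
      - (δ * (2*δ+1) * r ^ (-2*δ-1) - m0 * (2*δ+1)^2 * (r ^ (-2*δ-1) / r)) * (f r)^2 with hΨ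
  have hder : ∀ r, r0 ≤ r → HasDerivWithinAt Φ (Ψ r) (Ici r0) r := by
    intro r hr
    have hr1 : 0 < r := by linarith
    have hr2 : r - 2*m0 ≠ 0 := by linarith
    have hw : HasDerivWithinAt (fun r : ℝ => r ^ (-2*δ-1)) ((-2*δ-1) * r ^ (-2*δ-1-1)) (Ici r0) r :=
      (Real.hasDerivAt_rpow_const (Or.inl hr1.ne')).hasDerivWithinAt
    rw [show -2*δ-1-1 = -2*δ-2 by ring, (hpow r hr1).2.2] at hw
    have h1 := hasDerivWithinAt_id r (Ici r0)
    have h2 := h1.sub_const (2*m0)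
    have h3 := (((h1.mul h2).mul hw).mul ((h.hf r hr).mul (h.hf' r hr))).add
      (((h2.mul hw).const_mul ((2*δ+1)/2)).mul ((h.hf r hr).pow 2))
    refine (h3.congr_deriv ?_)
    simp only [Pi.mul_apply, Pi.pow_apply, id, hΨ]
    field_simp
    ring
  have hlow : ∀ r, r0 ≤ r → 1/2 * A r + κ * B r ≤ Ψ r + 1/2 * D r := by
    intro r hr
    have hr1 : 0 < r := by linarith
    have hr2 := hκr r hr
    have hr3 : 0 < r - 2*m0 := by linarith
    have hw : 0 < r ^ (-2*δ-1) := by positivity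
    obtain ⟨p1, p2, p3⟩ := hpow r hr1
    simp only [hA, hB, hD, hΨ, p1, p2]
    set w := r ^ (-2*δ-1)
    have e1 : κ * (w * r^2 * (f' r)^2) ≤ w * (r * (r - 2*m0) * (f' r)^2) := by
      have : κ * (w * r^2 * (f' r)^2) = w * (r * (κ * r) * (f' r)^2) := by ring
      rw [this]; gcongr
    have e2 : 0 ≤ m0 * (2*δ+1)^2 * (w / r) * (f r)^2 := by positivity
    -- `δ (2δ + 1) < 1` for `-1 < δ < -1/2`, which is absorbed by `L ≥ 2`.
    have e3 : δ * (2*δ+1) * (w * (f r)^2) ≤ 1 * (w * (f r)^2) := by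
      gcongr; nlinarith
    have e4 : 2 * (w * (f r)^2) ≤ L * (w * (f r)^2) := by gcongr
    -- Young's inequality for the source term
    have e5 : -(w * (r * (r - 2*m0) * g r * f r)) ≤ 1/2 * (w * (f r)^2) + 1/2 * (w * r^4 * (g r)^2) := by
      have e6 : (r * (r - 2*m0))^2 ≤ r^4 := by
        rw [show r^4 = (r*r)^2 by ring]; gcongr; linarith
      have e7 : w * ((r * (r - 2*m0))^2 * (g r)^2) ≤ w * (r^4 * (g r)^2) := by gcongr
      have e8 : 0 ≤ w * (f r + r * (r - 2*m0) * g r)^2 := by positivity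
      nlinarith
    nlinarith
  obtain ⟨C, hC, hbd⟩ := h.bound
  have hΦb : ∀ r, r0 ≤ r → |Φ r| ≤ 2 * C^2 := by
    intro r hr
    have hr1 : 0 < r := by linarith
    have hr3 : 0 < r - 2*m0 := by linarith
    obtain ⟨b1, b2⟩ := hbd r hr
    have hw : 0 < r ^ (-2*δ-1) := by positivity
    have hδa : |(2*δ+1)/2| ≤ 1 := by rw [abs_le]; constructor <;> linarith
    have q1 : r * r * r ^ (-2*δ-1) * (r ^ δ * r ^ (δ-1)) = 1 := by
      nth_rw 1 2 [← Real.rpow_one r]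
      simp only [← Real.rpow_add hr1]
      rw [← Real.rpow_zero r]; congr 1; ring
    have q2 : r * r ^ (-2*δ-1) * (r ^ δ * r ^ δ) = 1 := by
      nth_rw 1 [← Real.rpow_one r]
      simp only [← Real.rpow_add hr1]
      rw [← Real.rpow_zero r]; congr 1; ring
    calc |Φ r| ≤ r * (r - 2*m0) * r ^ (-2*δ-1) * (|f r| * |f' r|)
          + |(2*δ+1)/2| * ((r - 2*m0) * r ^ (-2*δ-1)) * (|f r| * |f r|) := by
          simp only [hΦ]
          refine (abs_add_le _ _).trans (le_of_eq ?_)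
          simp only [abs_mul, abs_of_pos hr1, abs_of_pos hr3, abs_of_pos hw, abs_pow]
          ring
      _ ≤ r * r * r ^ (-2*δ-1) * ((C * r ^ δ) * (C * r ^ (δ-1)))
          + 1 * (r * r ^ (-2*δ-1)) * ((C * r ^ δ) * (C * r ^ δ)) := by
          gcongr <;> linarith
      _ = C^2 * (r * r * r ^ (-2*δ-1) * (r ^ δ * r ^ (δ-1)))
          + C^2 * (r * r ^ (-2*δ-1) * (r ^ δ * r ^ δ)) := by ring
      _ = 2 * C^2 := by rw [q1, q2]; ring
  have hΨc : ContinuousOn Ψ (Ici r0) := by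
    have hw : ContinuousOn (fun r : ℝ => r ^ (-2*δ-1)) (Ici r0) := fun r hr =>
      (Real.continuousAt_rpow_const _ _ (Or.inl (h0.trans_le hr).ne')).continuousWithinAt
    have hi : ContinuousOn (fun r : ℝ => r ^ (-2*δ-1) / r) (Ici r0) :=
      hw.div continuousOn_id fun r hr => (h0.trans_le hr).ne'
    simp only [hΨ]
    fun_prop
  have hApos : ∀ r, r0 ≤ r → 0 ≤ A r := fun r hr => by
    have : 0 < r := by linarith
    simp only [hA]; positivity
  have hBpos : ∀ r, r0 ≤ r → 0 ≤ B r := fun r hr => by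
    have : 0 < r := by linarith
    simp only [hB]; positivity
  have hDpos : ∀ r, r0 ≤ r → 0 ≤ D r := fun r hr => by
    have : 0 < r := by linarith
    simp only [hD]; positivity
  have hE : IntegrableOn (fun r => 1/2 * A r + κ * B r) (Ioi r0) := by
    have hEc : ContinuousOn (fun r => 1/2 * A r + κ * B r) (Ici r0) := by fun_prop
    refine integrableOn_Ioi_of_intervalIntegral_norm_bounded
      (4 * C^2 + ∫ r in Ioi r0, 1/2 * D r) r0 (b := id) (l := Filter.atTop) ?_ Filter.tendsto_id ?_
    · intro R
      exact ((hEc.mono Icc_subset_Ici_self).integrableOn_Icc).mono_set Ioc_subset_Icc_self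
    · filter_upwards [Filter.eventually_ge_atTop r0] with R hR
      have hii : ∀ F : ℝ → ℝ, ContinuousOn F (Ici r0) → IntervalIntegrable F volume r0 R := by
        intro F hF
        refine (hF.mono ?_).intervalIntegrable
        rw [uIcc_of_le hR]; exact Icc_subset_Ici_self
      have hD2 : ContinuousOn (fun r => 1/2 * D r) (Ici r0) := by fun_prop
      have i1 : (∫ r in r0..R, ‖1/2 * A r + κ * B r‖) ≤ ∫ r in r0..R, (Ψ r + 1/2 * D r) := by
        refine intervalIntegral.integral_mono_on hR (hii _ hEc.norm) (hii _ (hΨc.add hD2)) ?_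
        intro r hr
        have := hApos r hr.1
        have := hBpos r hr.1
        rw [Real.norm_of_nonneg (by positivity)]
        exact hlow r hr.1
      rw [intervalIntegral.integral_add (hii _ hΨc) (hii _ hD2)] at i1
      have i2 : ∫ r in r0..R, Ψ r = Φ R - Φ r0 := by
        refine intervalIntegral.integral_eq_sub_of_hasDerivAt_of_le hR
          (fun r hr => ((hder r hr.1).continuousWithinAt).mono Icc_subset_Ici_self)
          (fun r hr => (hder r hr.1.le).hasDerivAt (Ici_mem_nhds hr.1)) (hii _ hΨc)
      have i3 : ∫ r in r0..R, 1/2 * D r ≤ ∫ r in Ioi r0, 1/2 * D r := by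
        rw [intervalIntegral.integral_of_le hR]
        refine setIntegral_mono_set (hgL.const_mul _) ?_ (Ioc_subset_Ioi_self.eventuallyLE)
        filter_upwards [ae_restrict_mem measurableSet_Ioi] with r hr
        have := hDpos r (le_of_lt hr)
        simp only [Pi.zero_apply]; positivity
      have i4 := abs_le.1 (hΦb R hR)
      have i5 := abs_le.1 (hΦb r0 le_rfl)
      simp only [id]
      linarith
  constructor
  · refine (hE.const_mul 2).mono' ((hAc.mono Ioi_subset_Ici_self).aestronglyMeasurable
      measurableSet_Ioi) ?_
    filter_upwards [ae_restrict_mem measurableSet_Ioi] with r hr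
    have hr : r0 ≤ r := le_of_lt hr
    rw [Real.norm_of_nonneg (hApos r hr)]
    have := mul_nonneg hκ0.le (hBpos r hr)
    linarith
  · refine (hE.const_mul κ⁻¹).mono' ((hBc.mono Ioi_subset_Ici_self).aestronglyMeasurable
      measurableSet_Ioi) ?_
    filter_upwards [ae_restrict_mem measurableSet_Ioi] with r hr
    have hr : r0 ≤ r := le_of_lt hr
    rw [Real.norm_of_nonneg (hBpos r hr), mul_add, inv_mul_cancel_left₀ hκ0.ne']
    have := hApos r hr
    have : 0 ≤ κ⁻¹ * (1/2 * A r) := by positivity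
    linarith

theorem wL2_congr {r0 μ : ℝ} {f₁ f₂ : ℝ → ℝ} (h : EqOn f₁ f₂ (Ici r0)) :
    wL2 r0 μ f₁ = wL2 r0 μ f₂ :=
  setLIntegral_congr_fun measurableSet_Ioi fun r hr => by
    simp only [h (Ioi_subset_Ici_self hr)]

/-- A decaying solution with source in the weighted spaces belongs to `H²_δ ∩ C²_δ`. -/
theorem IsSol.mem {m0 r0 δ : ℝ} (hm0 : 0 < m0) (hr0 : 2*m0 < r0)
    (hδ1 : -1 < δ) (hδ2 : δ < -(1/2)) {l : ℤ} (hl : 1 ≤ l) {g f f' : ℝ → ℝ}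
    (h : IsSol m0 r0 δ (l * (l + 1)) g f f') (hg : ContinuousOn g (Ici r0))
    (hgL : wL2 r0 (δ-2) g ≠ ⊤) (hgC : wC0 r0 (δ-2) g ≠ ⊤) :
    MemH2C2 r0 δ f ∧ (∀ r, r0 ≤ r → Lop r0 m0 l f r = g r) ∧
      ∀ r, r0 ≤ r → d1 r0 f r = f' r := by
  have h0 : 0 < r0 := by linarith
  have hl' : (1:ℝ) ≤ l := by exact_mod_cast hl
  set L : ℝ := l * (l + 1) with hLdef
  have hL : 2 ≤ L := by rw [hLdef]; nlinarith
  have hfc : ContinuousOn f (Ici r0) := fun r hr => (h.hf r hr).continuousWithinAt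
  have hfc' : ContinuousOn f' (Ici r0) := fun r hr => (h.hf' r hr).continuousWithinAt
  set S : ℝ → ℝ := fun r =>
    g r - 2*(r - m0)/(r*(r - 2*m0)) * f' r + L/(r*(r - 2*m0)) * f r with hS
  have hd1 : EqOn (d1 r0 f) f' (Ici r0) := fun r hr =>
    (h.hf r hr).derivWithin (uniqueDiffOn_Ici r0 r hr)
  have hd2 : EqOn (d2 r0 f) S (Ici r0) := fun r hr =>
    (((h.hf' r hr).congr (fun s hs => hd1 hs) (hd1 hr)).derivWithin (uniqueDiffOn_Ici r0 r hr))
  have hSc : ContinuousOn S (Ici r0) := by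
    have hne : ∀ r ∈ Ici r0, r * (r - 2*m0) ≠ 0 := fun r hr => by
      have : r0 ≤ r := hr
      have : 0 < r := by linarith
      have : 0 < r - 2*m0 := by linarith
      positivity
    have c1 : ContinuousOn (fun r : ℝ => 2*(r - m0)/(r*(r - 2*m0))) (Ici r0) :=
      ContinuousOn.div (by fun_prop) (by fun_prop) hne
    have c2 : ContinuousOn (fun r : ℝ => L/(r*(r - 2*m0))) (Ici r0) :=
      ContinuousOn.div (by fun_prop) (by fun_prop) hne
    simp only [hS]
    fun_prop
  obtain ⟨hA, hB⟩ := h.energy hm0 hr0 hδ1 hδ2 hL hg ((wL2_ne_top_iff h0 hg).1 hgL)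
  obtain ⟨C, hC, hbd⟩ := h.bound
  obtain ⟨Cg, hCg, hgb⟩ := (wC0_ne_top_iff h0 g).1 hgC
  set κ : ℝ := 1 - 2*m0/r0
  have hκ0 : 0 < κ := one_sub_div_pos h0 hr0
  have hκr : ∀ r, r0 ≤ r → κ * r ≤ r - 2*m0 := fun r hr => one_sub_div_mul_le hm0 h0 hr
  have hSb : ∀ r, r0 ≤ r → |S r| ≤ |g r| + 2/κ * (|f' r| / r) + L/κ * (|f r| / r^2) := by
    intro r hr
    have hr1 : 0 < r := by linarith
    have hr2 := hκr r hr
    have hr3 : 0 < r - 2*m0 := by linarith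
    have a1 : |2*(r - m0)/(r*(r - 2*m0))| ≤ 2/κ/r := by
      rw [abs_of_nonneg (div_nonneg (by linarith) (by positivity)), div_div]
      calc 2*(r - m0)/(r*(r - 2*m0)) ≤ 2*r/(r*(κ*r)) := by gcongr; linarith
        _ = _ := by field_simp
    have a2 : |L/(r*(r - 2*m0))| ≤ L/κ/r^2 := by
      rw [abs_of_nonneg (by positivity), div_div]
      calc L/(r*(r - 2*m0)) ≤ L/(r*(κ*r)) := by gcongr
        _ = _ := by ring_nf
    calc |S r| ≤ |g r| + |2*(r - m0)/(r*(r - 2*m0))| * |f' r| + |L/(r*(r - 2*m0))| * |f r| := by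
          simp only [hS, ← abs_mul]
          exact (abs_add_le _ _).trans (add_le_add_left (abs_sub _ _) _)
      _ ≤ |g r| + 2/κ/r * |f' r| + L/κ/r^2 * |f r| := by gcongr
      _ = _ := by ring
  have hf2C : wC0 r0 (δ-2) (d2 r0 f) ≠ ⊤ := by
    refine (wC0_ne_top_iff h0 _).2 ⟨Cg + 2/κ*C + L/κ*C, by positivity, fun r hr => ?_⟩
    have hr1 : 0 < r := by linarith
    obtain ⟨b1, b2⟩ := hbd r hr
    have p1 : r ^ (δ-1) / r = r ^ (δ-2) := by
      rw [← Real.rpow_sub_one hr1.ne']; congr 1; ring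
    have p2 : r ^ δ / r^2 = r ^ (δ-2) := by
      rw [← Real.rpow_natCast, ← Real.rpow_sub hr1]; norm_num
    rw [hd2 hr]
    calc |S r| ≤ _ := hSb r hr
      _ ≤ Cg * r ^ (δ-2) + 2/κ * (C * r ^ (δ-1) / r) + L/κ * (C * r ^ δ / r^2) := by
        gcongr; exact hgb r hr
      _ = _ := by rw [mul_div_assoc C, mul_div_assoc C, p1, p2]; ring
  have hf2L : wL2 r0 (δ-2) (d2 r0 f) ≠ ⊤ := by
    rw [wL2_congr hd2, wL2_ne_top_iff h0 hSc]
    have hgI := (wL2_ne_top_iff h0 hg).1 hgL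
    refine (((hgI.add (hB.const_mul ((2/κ)^2))).add (hA.const_mul ((L/κ)^2))).const_mul 3).mono'
      (((continuousOn_rpow_mul h0 _ hSc).mono Ioi_subset_Ici_self).aestronglyMeasurable
        measurableSet_Ioi) ?_
    filter_upwards [ae_restrict_mem measurableSet_Ioi] with r hr
    have hr : r0 ≤ r := le_of_lt hr
    have hr1 : 0 < r := by linarith
    have p1 : r ^ (-2*(δ-1)-1) = r ^ (-2*(δ-2)-1) / r^2 := by
      rw [← Real.rpow_natCast, ← Real.rpow_sub hr1]; congr 1; push_cast; ring
    have p2 : r ^ (-2*δ-1) = r ^ (-2*(δ-2)-1) / r^4 := by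
      rw [← Real.rpow_natCast, ← Real.rpow_sub hr1]; congr 1; push_cast; ring
    rw [Real.norm_of_nonneg (by positivity)]
    simp only [Pi.add_apply, p1, p2]
    set w := r ^ (-2*(δ-2)-1) with hw
    have hw0 : 0 ≤ w := by positivity
    have key : (S r)^2 ≤ 3 * ((g r)^2 + (2/κ * (|f' r| / r))^2 + (L/κ * (|f r| / r^2))^2) := by
      rw [← sq_abs (S r), ← sq_abs (g r)]
      refine (pow_le_pow_left₀ (abs_nonneg _) (hSb r hr) 2).trans ?_
      generalize |g r| = x
      generalize 2/κ * (|f' r| / r) = y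
      generalize L/κ * (|f r| / r^2) = z
      nlinarith [sq_nonneg (x-y), sq_nonneg (y-z), sq_nonneg (x-z)]
    calc w * (S r)^2 ≤ w * (3 * ((g r)^2 + (2/κ * (|f' r| / r))^2 + (L/κ * (|f r| / r^2))^2)) := by
          gcongr
      _ = _ := by simp only [mul_pow, div_pow, sq_abs]; ring
  refine ⟨⟨?_, ?_, ?_, hf2L, ?_, ?_, hf2C⟩, ?_, fun r hr => hd1 hr⟩
  · rw [show (2 : WithTop ℕ∞) = 1 + 1 by norm_num,
      contDiffOn_succ_iff_derivWithin (uniqueDiffOn_Ici r0)]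
    refine ⟨fun r hr => (h.hf r hr).differentiableWithinAt, by simp, ?_⟩
    rw [contDiffOn_one_iff_derivWithin (uniqueDiffOn_Ici r0)]
    refine ⟨fun r hr => ((h.hf' r hr).congr (fun s hs => hd1 hs)
      (hd1 hr)).differentiableWithinAt, hSc.congr hd2⟩
  · exact (wL2_ne_top_iff h0 hfc).2 hA
  · rw [wL2_congr hd1]; exact (wL2_ne_top_iff h0 hfc').2 hB
  · exact (wC0_ne_top_iff h0 f).2 ⟨C, hC, fun r hr => (hbd r hr).1⟩
  · exact (wC0_ne_top_iff h0 _).2 ⟨C, hC, fun r hr => by rw [hd1 hr]; exact (hbd r hr).2⟩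
  · intro r hr
    simp only [Lop, hd2 hr, hd1 hr, hS]
    rw [← hLdef]
    ring

/-! ### The growing homogeneous solution -/

/-- `u`, with derivative `u'`, solves `(P u')' = N (N + 1) u` on `[r0, ∞)`, where
`P = r (r - 2 m0)`, and is positive there, comparable with `r^N`, with `r u' = O(u)`. Continuity on
all of `ℝ` is only a convenience for composing with `r ↦ max r r0`. -/
structure IsGrowing (m0 r0 N : ℝ) (u u' : ℝ → ℝ) : Prop where
  cont : Continuous u
  hu : ∀ r, r0 ≤ r → HasDerivAt u (u' r) r
  hu' : ∀ r, r0 ≤ r → HasDerivAt u'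
    ((N * (N + 1) * u r - 2 * (r - m0) * u' r) / (r * (r - 2*m0))) r
  lower : ∃ c, 0 < c ∧ ∀ r, r0 ≤ r → c * r ^ N ≤ u r
  upper : ∃ c, 0 ≤ c ∧ ∀ r, r0 ≤ r → u r ≤ c * r ^ N
  deriv_le : ∃ c, 0 ≤ c ∧ ∀ r, r0 ≤ r → |u' r| ≤ c * (u r / r)

/-- Coefficients of the polynomial solution of degree `n` in powers of `r - 2 m0`, from the
Frobenius recursion at the horizon `r = 2 m0`. They vanish beyond `k = n`. -/
noncomputable def coef (m0 : ℝ) (n : ℕ) : ℕ → ℝ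
  | 0 => 1
  | k + 1 => coef m0 n k * ((n:ℝ) * (n + 1) - k * (k + 1)) / (2 * m0 * (k + 1)^2)

theorem coef_pos {m0 : ℝ} (hm0 : 0 < m0) (n : ℕ) : ∀ k ≤ n, 0 < coef m0 n k
  | 0, _ => by simp [coef]
  | k + 1, hk => by
    have ih := coef_pos hm0 n k (by lia)
    have hk' : (k:ℝ) + 1 ≤ n := by exact_mod_cast hk
    have : 0 < (n:ℝ) * (n + 1) - k * (k + 1) := by
      have : (0:ℝ) ≤ k := k.cast_nonneg
      nlinarith
    rw [coef]; positivity

theorem coef_succ_self (m0 : ℝ) (n : ℕ) : coef m0 n (n + 1) = 0 := by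
  simp [coef]

/-- The partial sums of the Frobenius series, `y = r - 2 m0`, solve the homogeneous equation up to
a single remainder term, which vanishes for `M = n + 1`. -/
theorem coef_sum {m0 : ℝ} (hm0 : 0 < m0) (n : ℕ) (y : ℝ) (M : ℕ) :
    y * (y + 2*m0) * ∑ k ∈ Finset.range M, coef m0 n k * (k * ((k-1:ℕ) * y ^ (k-1-1)))
      + 2 * (y + m0) * ∑ k ∈ Finset.range M, coef m0 n k * (k * y ^ (k-1))
    = (n:ℝ) * (n+1) * ∑ k ∈ Finset.range M, coef m0 n k * y ^ k
      - 2 * m0 * M^2 * coef m0 n M * y ^ (M-1) := by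
  induction M with
  | zero => simp
  | succ M ih =>
    have hc : 2 * m0 * ((M:ℝ) + 1)^2 * coef m0 n (M+1)
        = coef m0 n M * ((n:ℝ) * (n + 1) - M * (M + 1)) := by
      have : (M:ℝ) + 1 ≠ 0 := by positivity
      rw [coef]; field_simp
    simp only [Finset.sum_range_succ, Nat.cast_add, Nat.cast_one, hc, Nat.add_sub_cancel]
    rcases M with _ | _ | M
    · simp
      ring
    · simp at ih ⊢
      linarith
    · simp only [Nat.add_sub_cancel] at ih ⊢
      push_cast at ih ⊢
      linear_combination ih

theorem exists_growing {m0 r0 : ℝ} (hm0 : 0 < m0) (hr0 : 2*m0 < r0) (n : ℕ) :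
    ∃ u u' : ℝ → ℝ, IsGrowing m0 r0 n u u' := by
  have h0 : 0 < r0 := by linarith
  set κ : ℝ := 1 - 2*m0/r0
  have hκ0 : 0 < κ := one_sub_div_pos h0 hr0
  have hκr : ∀ r, r0 ≤ r → κ * r ≤ r - 2*m0 := fun r hr => one_sub_div_mul_le hm0 h0 hr
  set u : ℝ → ℝ := fun r => ∑ k ∈ Finset.range (n+1), coef m0 n k * (r - 2*m0) ^ k with hu
  set u' : ℝ → ℝ := fun r =>
    ∑ k ∈ Finset.range (n+1), coef m0 n k * (k * (r - 2*m0) ^ (k-1)) with hu'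
  have hpos : ∀ k ∈ Finset.range (n+1), 0 < coef m0 n k := fun k hk =>
    coef_pos hm0 n k (by simpa [Nat.lt_succ_iff] using hk)
  have hpd : ∀ (k : ℕ) (r : ℝ),
      HasDerivAt (fun r : ℝ => (r - 2*m0) ^ k) (k * (r - 2*m0) ^ (k-1)) r := fun k r => by
    simpa using ((hasDerivAt_id' r).sub_const (2*m0)).fun_pow k
  refine ⟨u, u', by fun_prop, fun r _ => ?_, fun r hr => ?_, ?_, ?_, ?_⟩
  · exact HasDerivAt.fun_sum fun k _ => (hpd k r).const_mul _
  · have h1 : HasDerivAt u' (∑ k ∈ Finset.range (n+1),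
        coef m0 n k * (k * ((k-1:ℕ) * (r - 2*m0) ^ (k-1-1)))) r :=
      HasDerivAt.fun_sum fun k _ => ((hpd (k-1) r).const_mul _).const_mul _
    refine h1.congr_deriv ?_
    have hr1 : r ≠ 0 := by linarith
    have hr2 : r - 2*m0 ≠ 0 := by linarith
    rw [eq_div_iff (mul_ne_zero hr1 hr2)]
    have := coef_sum hm0 n (r - 2*m0) (n+1)
    rw [coef_succ_self] at this
    simp only [hu, hu']
    linear_combination this
  · refine ⟨coef m0 n n * κ ^ n, mul_pos (hpos n (by simp)) (by positivity), fun r hr => ?_⟩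
    have hr1 : 0 < r := by linarith
    have hr2 := hκr r hr
    have hr3 : 0 < r - 2*m0 := by linarith
    have hp := (hpos n (by simp)).le
    calc coef m0 n n * κ ^ n * r ^ (n:ℝ) = coef m0 n n * (κ * r) ^ n := by
          rw [Real.rpow_natCast, mul_pow, mul_assoc]
      _ ≤ coef m0 n n * (r - 2*m0) ^ n := by gcongr
      _ ≤ u r := Finset.single_le_sum (f := fun k => coef m0 n k * (r - 2*m0) ^ k)
          (fun k hk => mul_nonneg (hpos k hk).le (by positivity)) (by simp)
  · refine ⟨∑ k ∈ Finset.range (n+1), coef m0 n k * (r0 ^ k / r0 ^ n),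
      Finset.sum_nonneg fun k hk => mul_nonneg (hpos k hk).le (by positivity), fun r hr => ?_⟩
    have hr1 : 0 < r := by linarith
    have hr3 : 0 < r - 2*m0 := by linarith
    rw [Finset.sum_mul]
    refine Finset.sum_le_sum fun k hk => ?_
    rw [mul_assoc, Real.rpow_natCast]
    refine mul_le_mul_of_nonneg_left ?_ (hpos k hk).le
    have h1 : (r / r0) ^ k ≤ (r / r0) ^ n :=
      pow_le_pow_right₀ ((one_le_div h0).2 hr) (by simpa [Nat.lt_succ_iff] using hk)
    calc (r - 2*m0) ^ k ≤ r ^ k := by gcongr; linarith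
      _ = r0 ^ k * (r / r0) ^ k := by rw [div_pow]; field_simp
      _ ≤ r0 ^ k * (r / r0) ^ n := by gcongr
      _ = _ := by rw [div_pow]; ring
  · refine ⟨n / κ, by positivity, fun r hr => ?_⟩
    have hr1 : 0 < r := by linarith
    have hr2 := hκr r hr
    have hr3 : 0 < r - 2*m0 := by linarith
    have hu'0 : 0 ≤ u' r := Finset.sum_nonneg fun k hk =>
      mul_nonneg (hpos k hk).le (by positivity)
    have h1 : (r - 2*m0) * u' r ≤ n * u r := by
      simp only [hu, hu', Finset.mul_sum]
      refine Finset.sum_le_sum fun k hk => ?_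
      have hk' : (k:ℝ) ≤ n := by
        have : k ≤ n := by simpa [Nat.lt_succ_iff] using hk
        exact_mod_cast this
      have hp := (hpos k hk).le
      have e : (r - 2*m0) * (coef m0 n k * (k * (r - 2*m0) ^ (k-1)))
          = k * (coef m0 n k * (r - 2*m0) ^ k) := by
        rcases k with _ | k
        · simp
        · rw [Nat.add_sub_cancel, pow_succ]; ring
      rw [e]; gcongr
    rw [abs_of_nonneg hu'0, div_mul_div_comm, le_div_iff₀ (by positivity)]
    calc u' r * (κ * r) ≤ u' r * (r - 2*m0) := by gcongr
      _ ≤ _ := by linarith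

/-! ### Existence by reduction of order -/

/-- For every source `g = O(r^(δ-2))` and every `c` there is a decaying solution whose Wronskian
with `u`, weighted by `P = r (r - 2 m0)`, equals `c` at `r0`. It is `f = u H` with `P u² H' = G`,
`G' = u P g`, `G(r0) = c` and `H → 0` at infinity. -/
theorem IsGrowing.exists_sol {m0 r0 δ N : ℝ} (hm0 : 0 < m0) (hr0 : 2*m0 < r0)
    (hN : 1 ≤ N) (hδ1 : -1 < δ) (hδ2 : δ < -(1/2)) {u u' : ℝ → ℝ} (hu : IsGrowing m0 r0 N u u')
    {g : ℝ → ℝ} (hg : ContinuousOn g (Ici r0)) {Cg : ℝ} (hCg : 0 ≤ Cg)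
    (hgb : ∀ r, r0 ≤ r → |g r| ≤ Cg * r ^ (δ - 2)) (c : ℝ) :
    ∃ f f' : ℝ → ℝ, IsSol m0 r0 δ (N * (N + 1)) g f f' ∧
      r0 * (r0 - 2*m0) * (u r0 * f' r0 - u' r0 * f r0) = c := by
  have h0 : 0 < r0 := by linarith
  set κ : ℝ := 1 - 2*m0/r0
  have hκ0 : 0 < κ := one_sub_div_pos h0 hr0
  have hκr : ∀ r, r0 ≤ r → κ * r ≤ r - 2*m0 := fun r hr => one_sub_div_mul_le hm0 h0 hr
  obtain ⟨c₁, hc₁, hlow⟩ := hu.lower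
  obtain ⟨c₂, hc₂, hupp⟩ := hu.upper
  obtain ⟨c₃, hc₃, hder⟩ := hu.deriv_le
  have hupos : ∀ r, r0 ≤ r → 0 < u r := fun r hr => by
    have : 0 < r := by linarith
    exact lt_of_lt_of_le (by positivity) (hlow r hr)
  have hPpos : ∀ r, r0 ≤ r → 0 < r * (r - 2*m0) := fun r hr =>
    mul_pos (by linarith) (by linarith)
  set ρ : ℝ → ℝ := fun r => max r r0 with hρ
  have hρc : Continuous ρ := by fun_prop
  have hρm : ∀ r, r0 ≤ ρ r := fun r => le_max_right _ _
  have hρe : ∀ r, r0 ≤ r → ρ r = r := fun r hr => max_eq_left hr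
  have hgc : Continuous fun r => g (ρ r) := hg.comp_continuous hρc hρm
  have huc : Continuous fun r => u (ρ r) := hu.cont.comp hρc
  -- Composing with `ρ` makes all integrands continuous on `ℝ` without changing them on `[r0, ∞)`.
  set k : ℝ → ℝ := fun r => u (ρ r) * (ρ r * (ρ r - 2*m0)) * g (ρ r) with hk
  have hkc : Continuous k := (huc.mul (hρc.mul (hρc.sub continuous_const))).mul hgc
  set G : ℝ → ℝ := fun r => c + ∫ s in r0..r, k s with hG
  have hGd : ∀ r, HasDerivAt G (k r) r := fun r =>
    ((hkc.integral_hasStrictDerivAt r0 r).hasDerivAt).const_add c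
  have hGc : Continuous G := continuous_iff_continuousAt.2 fun r => (hGd r).continuousAt
  set K : ℝ → ℝ := fun r => G r / (ρ r * (ρ r - 2*m0) * u (ρ r) ^ 2) with hK
  have hKc : Continuous K := hGc.div ((hρc.mul (hρc.sub continuous_const)).mul (huc.pow 2)) fun r =>
    (mul_pos (hPpos _ (hρm r)) (pow_pos (hupos _ (hρm r)) 2)).ne.symm
  -- `G = O(r^(N+δ+1))`: the exponent is positive, so the constant `c` is absorbed.
  have ha : 0 < N + δ + 1 := by linarith
  set CG : ℝ := |c| * r0 ^ (-(N + δ + 1)) + c₂ * Cg / (N + δ + 1) with hCG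
  have hCG0 : 0 ≤ CG := by positivity
  have hGb : ∀ r, r0 ≤ r → |G r| ≤ CG * r ^ (N + δ + 1) := by
    intro r hr
    have hr1 : 0 < r := by linarith
    have hci : IntervalIntegrable (fun s : ℝ => c₂ * Cg * s ^ (N + δ)) volume r0 r :=
      (intervalIntegral.intervalIntegrable_rpow' (by linarith)).const_mul _
    have h1 : ‖∫ s in r0..r, k s‖ ≤ ∫ s in r0..r, c₂ * Cg * s ^ (N + δ) := by
      refine intervalIntegral.norm_integral_le_of_norm_le hr ?_ hci
      refine Filter.Eventually.of_forall fun s hs => ?_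
      have hs0 : r0 ≤ s := hs.1.le
      have hs1 : 0 < s := by linarith
      have hs3 : 0 < s - 2*m0 := by linarith
      have := hupos s hs0
      simp only [hk, hρe s hs0, Real.norm_eq_abs, abs_mul, abs_of_pos hs1, abs_of_pos hs3,
        abs_of_pos this]
      calc u s * (s * (s - 2*m0)) * |g s| ≤ (c₂ * s ^ N) * (s * s) * (Cg * s ^ (δ - 2)) := by
            gcongr
            · exact hupp s hs0
            · linarith
            · exact hgb s hs0
        _ = c₂ * Cg * (s ^ N * s ^ (2:ℝ) * s ^ (δ - 2)) := by
            rw [Real.rpow_two]; ring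
        _ = _ := by rw [← Real.rpow_add hs1, ← Real.rpow_add hs1]; congr 2; ring
    rw [intervalIntegral.integral_const_mul, integral_rpow (Or.inl (by linarith))] at h1
    have h2 : |c| ≤ |c| * r0 ^ (-(N + δ + 1)) * r ^ (N + δ + 1) := by
      have : 1 ≤ r0 ^ (-(N + δ + 1)) * r ^ (N + δ + 1) := by
        rw [Real.rpow_neg h0.le, inv_mul_eq_div, one_le_div (by positivity)]
        exact Real.rpow_le_rpow h0.le hr ha.le
      rw [mul_assoc]
      exact le_mul_of_one_le_right (abs_nonneg _) this
    have h3 : (r ^ (N + δ + 1) - r0 ^ (N + δ + 1)) / (N + δ + 1)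
        ≤ r ^ (N + δ + 1) / (N + δ + 1) := by
      gcongr
      have : 0 < r0 ^ (N + δ + 1) := by positivity
      linarith
    have h4 : c₂ * Cg * ((r ^ (N + δ + 1) - r0 ^ (N + δ + 1)) / (N + δ + 1))
        ≤ c₂ * Cg * (r ^ (N + δ + 1) / (N + δ + 1)) := by gcongr
    calc |G r| ≤ |c| + ‖∫ s in r0..r, k s‖ := abs_add_le _ _
      _ ≤ |c| * r0 ^ (-(N + δ + 1)) * r ^ (N + δ + 1)
          + c₂ * Cg * (r ^ (N + δ + 1) / (N + δ + 1)) := add_le_add h2 (h1.trans h4)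
      _ = _ := by rw [hCG]; ring
  set CQ : ℝ := CG / (κ * c₁) with hCQ
  have hCQ0 : 0 ≤ CQ := by positivity
  have hQb : ∀ r, r0 ≤ r → |G r / (r * (r - 2*m0) * u r)| ≤ CQ * r ^ (δ - 1) := by
    intro r hr
    have hr1 : 0 < r := by linarith
    have hr2 := hκr r hr
    have := hupos r hr
    rw [abs_div, abs_of_pos (mul_pos (hPpos r hr) this)]
    calc |G r| / (r * (r - 2*m0) * u r)
        ≤ CG * r ^ (N + δ + 1) / (r * (κ * r) * (c₁ * r ^ N)) := by
          gcongr
          · exact hGb r hr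
          · exact (hPpos r hr).le
          · exact hlow r hr
      _ = CG / (κ * c₁) * (r ^ (N + δ + 1) / (r ^ (2:ℝ) * r ^ N)) := by
          rw [Real.rpow_two]; field_simp
      _ = _ := by
          rw [← Real.rpow_add hr1, ← Real.rpow_sub hr1]; congr 2; ring
  have hKb : ∀ r, r0 ≤ r → |K r| ≤ CQ / c₁ * r ^ (δ - N - 1) := by
    intro r hr
    have hr1 : 0 < r := by linarith
    have hup := hupos r hr
    have e : K r = G r / (r * (r - 2*m0) * u r) / u r := by
      simp only [hK, hρe r hr]; rw [div_div]; congr 1; ring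
    rw [e, abs_div, abs_of_pos hup]
    calc |G r / (r * (r - 2*m0) * u r)| / u r ≤ CQ * r ^ (δ - 1) / (c₁ * r ^ N) := by
          gcongr
          · exact hQb r hr
          · exact hlow r hr
      _ = CQ / c₁ * (r ^ (δ - 1) / r ^ N) := by rw [mul_div_mul_comm]
      _ = _ := by rw [← Real.rpow_sub hr1]; congr 2; ring
  have hrpi : ∀ r, r0 ≤ r → IntegrableOn (fun s : ℝ => CQ / c₁ * s ^ (δ - N - 1)) (Ioi r) :=
    fun r hr => (integrableOn_Ioi_rpow_of_lt (by linarith) (by linarith)).const_mul _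
  have hKae : ∀ r, r0 ≤ r → ∀ᵐ s ∂(volume.restrict (Ioi r)),
      ‖K s‖ ≤ CQ / c₁ * s ^ (δ - N - 1) := by
    intro r hr
    filter_upwards [ae_restrict_mem measurableSet_Ioi] with s hs
    exact hKb s (hr.trans (le_of_lt hs))
  have hKi : ∀ r, r0 ≤ r → IntegrableOn K (Ioi r) := fun r hr =>
    (hrpi r hr).mono' hKc.aestronglyMeasurable (hKae r hr)
  set H : ℝ → ℝ := fun r => (∫ s in r0..r, K s) - ∫ s in Ioi r0, K s with hH
  have hHd : ∀ r, HasDerivAt H (K r) r := fun r =>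
    ((hKc.integral_hasStrictDerivAt r0 r).hasDerivAt).sub_const _
  have hHb : ∀ r, r0 ≤ r → |H r| ≤ CQ / c₁ / (N - δ) * r ^ (δ - N) := by
    intro r hr
    have hr1 : 0 < r := by linarith
    have e : H r = - ∫ s in Ioi r, K s := by
      simp only [hH]
      rw [← intervalIntegral.integral_interval_add_Ioi (hKi r0 le_rfl) (hKi r hr)]; ring
    rw [e, abs_neg]
    refine (norm_integral_le_of_norm_le (hrpi r hr) (hKae r hr)).trans (le_of_eq ?_)
    rw [integral_const_mul, integral_Ioi_rpow_of_lt (by linarith) hr1]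
    have : N - δ ≠ 0 := by linarith
    have : δ - N ≠ 0 := by linarith
    rw [show δ - N - 1 + 1 = δ - N by ring, show δ - N = -(N - δ) by ring]
    field_simp
  refine ⟨fun r => u r * H r, fun r => u' r * H r + G r / (r * (r - 2*m0) * u r), ⟨?_, ?_, ?_⟩, ?_⟩
  · intro r hr
    refine (((hu.hu r hr).mul (hHd r)).congr_deriv ?_).hasDerivWithinAt
    have := (hPpos r hr).ne'
    have := (hupos r hr).ne'
    simp only [hK, hρe r hr]
    field_simp
  · intro r hr
    have hr1 : r ≠ 0 := by linarith
    have hr2 : r - 2*m0 ≠ 0 := by linarith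
    have h3 := (hupos r hr).ne'
    have hid := hasDerivAt_id r
    have hP : HasDerivAt (fun r : ℝ => r * (r - 2*m0)) (1 * (r - 2*m0) + r * 1) r :=
      hid.mul (hid.sub_const _)
    have hne : r * (r - 2*m0) * u r ≠ 0 := mul_ne_zero (mul_ne_zero hr1 hr2) h3
    refine ((((hu.hu' r hr).mul (hHd r)).add
      ((hGd r).div (hP.mul (hu.hu r hr)) hne)).congr_deriv ?_).hasDerivWithinAt
    simp only [hK, hk, hρe r hr, Pi.mul_apply]
    field_simp
    ring
  · set CH := CQ / c₁ / (N - δ) with hCH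
    have hCH0 : 0 ≤ CH := div_nonneg (by positivity) (by linarith)
    have hf : ∀ r, r0 ≤ r → |u r * H r| ≤ c₂ * CH * r ^ δ := by
      intro r hr
      have hr1 : 0 < r := by linarith
      rw [abs_mul, abs_of_pos (hupos r hr)]
      calc u r * |H r| ≤ (c₂ * r ^ N) * (CH * r ^ (δ - N)) := by
            gcongr
            · exact hupp r hr
            · exact hHb r hr
        _ = c₂ * CH * (r ^ N * r ^ (δ - N)) := by ring
        _ = _ := by rw [← Real.rpow_add hr1]; congr 2; ring
    refine ⟨max (c₂ * CH) (c₃ * (c₂ * CH) + CQ), le_max_of_le_left (by positivity),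
      fun r hr => ?_⟩
    have hr1 : 0 < r := by linarith
    constructor
    · exact (hf r hr).trans (by gcongr; exact le_max_left _ _)
    · have h1 : |u' r * H r| ≤ c₃ * (c₂ * CH) * r ^ (δ - 1) := by
        rw [abs_mul]
        calc |u' r| * |H r| ≤ c₃ * (u r / r) * |H r| := by gcongr; exact hder r hr
          _ = c₃ * (|u r * H r| / r) := by
            rw [abs_mul, abs_of_pos (hupos r hr)]; ring
          _ ≤ c₃ * (c₂ * CH * r ^ δ / r) := by gcongr; exact hf r hr
          _ = _ := by rw [Real.rpow_sub_one hr1.ne']; ring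
      calc |u' r * H r + G r / (r * (r - 2*m0) * u r)| ≤ _ := abs_add_le _ _
        _ ≤ c₃ * (c₂ * CH) * r ^ (δ - 1) + CQ * r ^ (δ - 1) := add_le_add h1 (hQb r hr)
        _ = (c₃ * (c₂ * CH) + CQ) * r ^ (δ - 1) := by ring
        _ ≤ _ := by gcongr; exact le_max_right _ _
  · have hr1 : r0 ≠ 0 := h0.ne'
    have hr2 : r0 - 2*m0 ≠ 0 := by linarith
    have h3 := (hupos r0 le_rfl).ne'
    have hG0 : G r0 = c := by simp [hG]
    simp only [hG0]
    field_simp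
    ring

/-! ### Well-posedness -/

theorem stmt1 (m0 r0 δ : ℝ) (hm0 : 0 < m0) (hr0 : 2*m0 < r0)
    (hδ1 : -1 < δ) (hδ2 : δ < -(1/2))
    (l : ℤ) (hl : 1 ≤ l)
    (g : ℝ → ℝ) (hg : ContinuousOn g (Set.Ici r0))
    (hgL : wL2 r0 (δ-2) g ≠ ⊤) (hgC : wC0 r0 (δ-2) g ≠ ⊤)
    (v : ℝ) :
    ∃ f : ℝ → ℝ,
      (MemH2C2 r0 δ f ∧ (∀ r, r0 ≤ r → Lop r0 m0 l f r = g r) ∧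
        d1 r0 f r0 - (2/r0) * f r0 = v) ∧
      ∀ f₂ : ℝ → ℝ,
        (MemH2C2 r0 δ f₂ ∧ (∀ r, r0 ≤ r → Lop r0 m0 l f₂ r = g r) ∧
          d1 r0 f₂ r0 - (2/r0) * f₂ r0 = v) →
        ∀ r, r0 ≤ r → f₂ r = f r := by
  have h0 : 0 < r0 := by linarith
  obtain ⟨n, rfl⟩ := Int.eq_ofNat_of_zero_le (show 0 ≤ l by lia)
  have hn : (1:ℝ) ≤ n := by exact_mod_cast hl
  have hL : (0:ℝ) < n * (n + 1) := by positivity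
  obtain ⟨u, u', hu⟩ := exists_growing hm0 hr0 n
  obtain ⟨Cg, hCg, hgb⟩ := (wC0_ne_top_iff h0 g).1 hgC
  obtain ⟨p, p', hp, -⟩ := hu.exists_sol hm0 hr0 hn hδ1 hδ2 hg hCg hgb 0
  obtain ⟨q, q', hq, hqW⟩ := hu.exists_sol (g := fun _ => 0) hm0 hr0 hn hδ1 hδ2
    continuousOn_const le_rfl (by simp) 1
  -- Otherwise `q` would vanish by uniqueness, contradicting its Wronskian being `1`.
  have hq0 : q' r0 - 2 / r0 * q r0 ≠ 0 := by
    intro h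
    have hz := hq.eq_zero hm0 hr0 hδ2 hL (by linarith) r0 le_rfl
    have hz' : q' r0 = 0 := by simpa [hz] using h
    simp [hz, hz'] at hqW
  set t : ℝ := (v - (p' r0 - 2 / r0 * p r0)) / (q' r0 - 2 / r0 * q r0) with ht
  have hsol : IsSol m0 r0 δ (((n:ℕ):ℤ) * (((n:ℕ):ℤ) + 1)) g (fun r => p r + t * q r)
      (fun r => p' r + t * q' r) := by
    simpa using hp.add_smul hq t
  obtain ⟨hmem, hop, hd⟩ := hsol.mem hm0 hr0 hδ1 hδ2 hl hg hgL hgC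
  have hbc : d1 r0 (fun r => p r + t * q r) r0 - (2/r0) * (p r0 + t * q r0) = v := by
    rw [hd r0 le_rfl]
    have : t * (q' r0 - 2 / r0 * q r0) = v - (p' r0 - 2 / r0 * p r0) := div_mul_cancel₀ _ hq0
    linear_combination this
  refine ⟨fun r => p r + t * q r, ⟨hmem, hop, hbc⟩, ?_⟩
  rintro f₂ ⟨hmem₂, hop₂, hbc₂⟩ r hr
  have h2 := (isSol_of_mem hm0 hr0 hmem₂ hop₂).add_smul hsol (-1)
  have hz := IsSol.eq_zero hm0 hr0 hδ2 (L := ((n:ℕ):ℤ) * (((n:ℕ):ℤ) + 1)) (by simpa using hL)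
    (f := fun r => f₂ r + (-1) * (p r + t * q r))
    (f' := fun r => d1 r0 f₂ r + (-1) * (p' r + t * q' r)) (by simpa using h2) (by
      rw [hd r0 le_rfl] at hbc
      linear_combination hbc₂ - hbc) r hr
  linarith
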